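/- There exists an absolute constant c such that the following holds. Let P be a set of m distinct points in the real plane ℝ² and let L be a set of n distinct lines in ℝ². Then the number of incidences satisfies I(P,L) ≤ c·(m^{2/3}·n^{2/3} + m + n). -/

import Mathlib

attribute [local instance] Classical.propDecidable

noncomputable section

/-- The number of incidences between a finite set of points and a finite set of
curves (subsets of `ℝ^d`): the number of pairs `(p, γ)` with `p ∈ γ`. -/
def Incidences {d : ℕ} (P : Finset (Fin d → ℝ)) (C : Finset (Set (Fin d → ℝ))) : ℕ :=
  ((P ×ˢ C).filter fun pc => pc.1 ∈ pc.2).card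

/-- A line in `ℝ^d`. -/
def IsLine {d : ℕ} (ℓ : Set (Fin d → ℝ)) : Prop :=
  ∃ a b : Fin d → ℝ, b ≠ 0 ∧ ℓ = {x | ∃ t : ℝ, x = a + t • b}

/-!
Joining consecutive points of `P` along each curve of `L` draws a graph whose vertices are the
points and whose edges number at least `I(P, L) - |L|`. Two curves meet at most once, so the drawing
has at most `|L|²` crossings. Conversely a drawing with many edges has many crossings: a plane
drawing on `m` vertices has at most `3m` edges, so deleting one edge per crossing bounds the excess
of the number of edges over `3m`, and applying this weak bound to a random induced subdrawing gives
`e³ ≤ 72 m² X` for a drawing with `e ≥ 6m` edges and `X` ordered pairs of crossing edges. Comparing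
with `X ≤ |L|²` gives the theorem. Vertical lines contribute at most one incidence per point and are
counted separately, so that all other curves are graphs of functions.
-/

namespace SzemerediTrotter

open Finset

section BernoulliSampling

variable {α β R : Type*} [DecidableEq α] [CommRing R]

/-- The probability that a random subset of `V`, to which each element belongs independently with
probability `p`, equals `S`. -/
def bernoulliWeight (p : R) (V S : Finset α) : R := p ^ #S * (1 - p) ^ #(V \ S)

lemma bernoulliWeight_nonneg [PartialOrder R] [IsOrderedRing R] {p : R} (hp₀ : 0 ≤ p)
    (hp₁ : p ≤ 1) (V S : Finset α) : 0 ≤ bernoulliWeight p V S :=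
  mul_nonneg (pow_nonneg hp₀ _) (pow_nonneg (sub_nonneg.2 hp₁) _)

lemma sum_bernoulliWeight_of_subset (p : R) {V T : Finset α} (hT : T ⊆ V) :
    ∑ S ∈ V.powerset with T ⊆ S, bernoulliWeight p V S = p ^ #T := by
  -- Expand `∏ i ∈ V, (p + q i)`, where `q i = 1 - p` off `T` and `q i = 0` on `T`.
  have hprod : ∏ i ∈ V, (p + if i ∉ T then 1 - p else 0) = p ^ #T := by
    have hfactor (i : α) : (p + if i ∉ T then 1 - p else 0) = if i ∈ T then p else 1 := by
      split_ifs <;> first | contradiction | ring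
    rw [prod_congr rfl fun i _ => hfactor i, prod_ite_mem, inter_eq_right.2 hT, prod_const]
  rw [← hprod, prod_add, sum_filter]
  refine sum_congr rfl fun S _ => ?_
  have hsubset : (∀ i ∈ V \ S, i ∉ T) ↔ T ⊆ S := by
    simp only [mem_sdiff]
    exact ⟨fun h i hi => by_contra fun hS => h i ⟨hT hi, hS⟩ hi, fun h i hi hiT => hi.2 (h hiT)⟩
  simp only [prod_ite_zero, hsubset, prod_const, mul_ite, mul_zero, bernoulliWeight]

lemma sum_bernoulliWeight_mul_card_filter (p : R) {V : Finset α} {A : Finset β}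
    {g : β → Finset α} {k : ℕ} (hg : ∀ a ∈ A, g a ⊆ V) (hk : ∀ a ∈ A, #(g a) = k) :
    ∑ S ∈ V.powerset, bernoulliWeight p V S * #{a ∈ A | g a ⊆ S} = p ^ k * #A := by
  calc ∑ S ∈ V.powerset, bernoulliWeight p V S * #{a ∈ A | g a ⊆ S}
      = ∑ S ∈ V.powerset, ∑ a ∈ A, if g a ⊆ S then bernoulliWeight p V S else 0 :=
        sum_congr rfl fun S _ => by rw [← sum_filter, sum_const, nsmul_eq_mul, mul_comm]
    _ = ∑ a ∈ A, ∑ S ∈ V.powerset with g a ⊆ S, bernoulliWeight p V S := by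
        rw [sum_comm]
        simp only [sum_filter]
    _ = ∑ _a ∈ A, p ^ k :=
        sum_congr rfl fun _ ha => by rw [sum_bernoulliWeight_of_subset p (hg _ ha), hk _ ha]
    _ = p ^ k * #A := by rw [sum_const, nsmul_eq_mul, mul_comm]

lemma sum_bernoulliWeight_mul_card (p : R) (V : Finset α) :
    ∑ S ∈ V.powerset, bernoulliWeight p V S * #S = p * #V := by
  have h := sum_bernoulliWeight_mul_card_filter p (V := V) (A := V) (g := fun v => {v}) (k := 1)
    (by simp) (by simp)
  rw [pow_one] at h
  rw [← h]
  refine sum_congr rfl fun S hS => ?_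
  simp only [singleton_subset_iff, filter_mem_eq_inter, inter_eq_right.2 (mem_powerset.1 hS)]

/-- Taking expectations over a random subset `S ⊆ V` amplifies a linear inequality between the
numbers of points, of `k`-sets and of `l`-sets inside `S`. -/
lemma pow_mul_card_le_of_forall_subset {γ : Type*} [PartialOrder R] [IsOrderedRing R]
    {V : Finset α} {A : Finset β} {B : Finset γ} {g : β → Finset α} {h : γ → Finset α} {k l : ℕ}
    (hg : ∀ a ∈ A, g a ⊆ V) (hgk : ∀ a ∈ A, #(g a) = k)
    (hh : ∀ b ∈ B, h b ⊆ V) (hhl : ∀ b ∈ B, #(h b) = l) {c p : R} (hp₀ : 0 ≤ p) (hp₁ : p ≤ 1)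
    (hle : ∀ S ⊆ V, (#{a ∈ A | g a ⊆ S} : R) ≤ c * #S + #{b ∈ B | h b ⊆ S}) :
    p ^ k * #A ≤ c * (p * #V) + p ^ l * #B := by
  rw [← sum_bernoulliWeight_mul_card_filter p hg hgk,
    ← sum_bernoulliWeight_mul_card_filter p hh hhl,
    ← sum_bernoulliWeight_mul_card, mul_sum, ← sum_add_distrib]
  refine sum_le_sum fun S hS => ?_
  calc bernoulliWeight p V S * #{a ∈ A | g a ⊆ S}
      ≤ bernoulliWeight p V S * (c * #S + #{b ∈ B | h b ⊆ S}) :=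
        mul_le_mul_of_nonneg_left (hle S (mem_powerset.1 hS)) (bernoulliWeight_nonneg hp₀ hp₁ V S)
    _ = _ := by ring

/-- The optimal sampling probability is `p = 2cm/e`, which makes the linear term half of the
left-hand side. -/
lemma pow_three_le_of_forall_prob {K : Type*} [Field K] [LinearOrder K] [IsStrictOrderedRing K]
    {c m e x : K} (hc : 0 < c) (hm : 0 < m) (he : 2 * c * m ≤ e)
    (h : ∀ p, 0 ≤ p → p ≤ 1 → p ^ 2 * e ≤ c * (p * m) + p ^ 4 * x) :
    e ^ 3 ≤ 8 * c ^ 2 * m ^ 2 * x := by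
  have hcm : 0 < 2 * c * m := by positivity
  have he₀ : 0 < e := hcm.trans_le he
  obtain ⟨p, hp⟩ : ∃ p, p = 2 * c * m / e := ⟨_, rfl⟩
  have hp₀ : 0 < p := hp ▸ div_pos hcm he₀
  have hpe : p * e = 2 * c * m := by rw [hp, div_mul_cancel₀ _ he₀.ne']
  have hhalf : p ^ 2 * e ≤ p ^ 2 * (2 * p ^ 2 * x) := by
    linear_combination 2 * h p hp₀.le (hp ▸ (div_le_one he₀).2 he) - p * hpe
  have hle : e ≤ 2 * p ^ 2 * x := le_of_mul_le_mul_left hhalf (by positivity)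
  calc e ^ 3 = e ^ 2 * e := by ring
    _ ≤ e ^ 2 * (2 * p ^ 2 * x) := by gcongr
    _ = 2 * (p * e) ^ 2 * x := by ring
    _ = 8 * c ^ 2 * m ^ 2 * x := by rw [hpe]; ring

end BernoulliSampling

section Pseudolines

/-- The coordinate plane in the encoding of `Incidences`; `p 0` is the abscissa of `p` and `p 1` its
ordinate. -/
abbrev Plane := Fin 2 → ℝ

/-- The graph of `f`, as a curve in the plane. -/
def graph (f : ℝ → ℝ) : Set Plane := {p | p 1 = f (p 0)}

/-- The vertical line with abscissa `c`. -/
def verticalLine (c : ℝ) : Set Plane := {p | p 0 = c}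

@[simp]
lemma mem_graph {f : ℝ → ℝ} {p : Plane} : p ∈ graph f ↔ p 1 = f (p 0) := Iff.rfl

@[simp]
lemma mem_verticalLine {c : ℝ} {p : Plane} : p ∈ verticalLine c ↔ p 0 = c := Iff.rfl

lemma plane_ext {p q : Plane} (h₀ : p 0 = q 0) (h₁ : p 1 = q 1) : p = q :=
  funext (Fin.forall_fin_two.2 ⟨h₀, h₁⟩)

lemma eq_of_mem_graph {f : ℝ → ℝ} {p q : Plane} (hp : p ∈ graph f) (hq : q ∈ graph f)
    (h : p 0 = q 0) : p = q :=
  plane_ext h (by rw [mem_graph.1 hp, mem_graph.1 hq, h])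

lemma graph_injective : Function.Injective graph := fun f g hfg => funext fun x => by
  have hx : (![x, f x] : Plane) ∈ graph g := hfg ▸ rfl
  exact hx

lemma pairwiseDisjoint_verticalLine : (Set.range verticalLine).PairwiseDisjoint id := by
  rintro _ ⟨c, rfl⟩ _ ⟨d, rfl⟩ hne
  refine Set.disjoint_left.2 fun p hc hd => hne ?_
  rw [← mem_verticalLine.1 hc, ← mem_verticalLine.1 hd]

lemma exists_mem_Ioo_eq_of_lt_of_lt {f g : ℝ → ℝ} (hf : Continuous f) (hg : Continuous g)
    {a b : ℝ} (hab : a ≤ b) (ha : f a < g a) (hb : g b < f b) : ∃ x ∈ Set.Ioo a b, f x = g x := by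
  obtain ⟨x, hx, hfg⟩ := intermediate_value_Ioo hab (hf.sub hg).continuousOn
    (⟨sub_neg.2 ha, sub_pos.2 hb⟩ : (0 : ℝ) ∈ Set.Ioo _ _)
  exact ⟨x, hx, sub_eq_zero.1 hfg⟩

/-- A family of `x`-monotone pseudolines, encoded by the functions of which they are the graphs:
continuous functions any two of which agree at most once. -/
structure IsPseudolineFamily (F : Set (ℝ → ℝ)) : Prop where
  continuous : ∀ f ∈ F, Continuous f
  eq_of_eq_of_eq : ∀ f ∈ F, ∀ g ∈ F, ∀ x y, x ≠ y → f x = g x → f y = g y → f = g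

namespace IsPseudolineFamily

variable {F : Set (ℝ → ℝ)} {f g : ℝ → ℝ}

lemma lt_of_lt_of_eq (hF : IsPseudolineFamily F) (hf : f ∈ F) (hg : g ∈ F) {x y z : ℝ}
    (hxy : x < y) (hxz : x < z) (hx : f x = g x) (hy : f y < g y) : f z < g z := by
  by_contra! hz
  obtain ⟨t, ht, hfg⟩ := isPreconnected_Ioi.intermediate_value₂ (Set.mem_Ioi.2 hxy)
    (Set.mem_Ioi.2 hxz) (hF.continuous f hf).continuousOn (hF.continuous g hg).continuousOn hy.le hz
  rw [hF.eq_of_eq_of_eq f hf g hg x t ht.ne hx hfg] at hy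
  exact lt_irrefl _ hy

lemma of_pairwise_subsingleton (hF : ∀ f ∈ F, Continuous f)
    (hpair : F.Pairwise fun f g => (graph f ∩ graph g).Subsingleton) : IsPseudolineFamily F where
  continuous := hF
  eq_of_eq_of_eq f hf g hg x y hxy hx hy := by
    by_contra hne
    have hpt : (![x, f x] : Plane) = ![y, f y] :=
      hpair hf hg hne ⟨rfl, hx⟩ ⟨rfl, hy⟩
    exact hxy (congrFun hpt 0)

end IsPseudolineFamily

end Pseudolines

section Arcs

/-- A bounded piece of the graph of `curve`, the edge of a plane drawing. -/
@[ext]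
structure Arc where
  curve : ℝ → ℝ
  left : Plane
  right : Plane
  left_mem : left ∈ graph curve
  right_mem : right ∈ graph curve
  left_lt_right : left 0 < right 0

namespace Arc

/-- The abscissas of the relative interior of an arc. -/
def span (e : Arc) : Set ℝ := Set.Ioo (e.left 0) (e.right 0)

/-- The two endpoints of an arc. -/
def ends (e : Arc) : Finset Plane := {e.left, e.right}

/-- Two arcs cross if their relative interiors meet. -/
def Crosses (e f : Arc) : Prop := ∃ x ∈ e.span ∩ f.span, e.curve x = f.curve x

/-- Orders the arcs leaving a common left end from bottom to top: curves of a pseudoline family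
through that point do not meet again, so comparing them at one larger abscissa suffices. -/
def rank (e : Arc) : ℝ := e.curve (e.left 0 + 1)

lemma ends_subset_iff {e : Arc} {S : Finset Plane} : e.ends ⊆ S ↔ e.left ∈ S ∧ e.right ∈ S := by
  simp [ends, insert_subset_iff]

lemma card_ends (e : Arc) : #e.ends = 2 :=
  card_pair fun h => e.left_lt_right.ne (congrFun h 0)

lemma mem_graph_of_mem_ends {e : Arc} {v : Plane} (hv : v ∈ e.ends) : v ∈ graph e.curve := by
  obtain rfl | rfl : v = e.left ∨ v = e.right := by simpa [ends] using hv
  exacts [e.left_mem, e.right_mem]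

lemma notMem_span_of_mem_ends {e : Arc} {v : Plane} (hv : v ∈ e.ends) : v 0 ∉ e.span := by
  obtain rfl | rfl : v = e.left ∨ v = e.right := by simpa [ends] using hv
  exacts [Set.left_notMem_Ioo, Set.right_notMem_Ioo]

lemma curve_left_eq {e f : Arc} (hleft : e.left = f.left) :
    e.curve (e.left 0) = f.curve (e.left 0) := by
  rw [← mem_graph.1 e.left_mem, hleft, ← mem_graph.1 f.left_mem]

lemma curve_le_of_not_crosses {e f : Arc} (he : Continuous e.curve) (hf : Continuous f.curve)
    (hcross : ¬ e.Crosses f) {a b : ℝ} (hab : a ≤ b) (hea : e.left 0 ≤ a) (hfa : f.left 0 ≤ a)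
    (heb : b ≤ e.right 0) (hfb : b ≤ f.right 0) (hlt : e.curve b < f.curve b) :
    e.curve a ≤ f.curve a := by
  by_contra! ha
  obtain ⟨x, hx, hfe⟩ := exists_mem_Ioo_eq_of_lt_of_lt hf he hab ha hlt
  exact hcross ⟨x, ⟨Set.Ioo_subset_Ioo hea heb hx, Set.Ioo_subset_Ioo hfa hfb hx⟩, hfe.symm⟩

end Arc

/-- The arcs `E` form a drawing on the vertices `V` along curves of the pseudoline family `F`: they
end in `V` and no vertex lies in the relative interior of an arc. Arcs are allowed to cross. -/
structure IsDrawing (F : Set (ℝ → ℝ)) (V : Finset Plane) (E : Finset Arc) : Prop where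
  isPseudolineFamily : IsPseudolineFamily F
  curve_mem : ∀ e ∈ E, e.curve ∈ F
  ends_subset : ∀ e ∈ E, e.ends ⊆ V
  notMem_graph : ∀ e ∈ E, ∀ v ∈ V, v 0 ∈ e.span → v ∉ graph e.curve

namespace IsDrawing

variable {F : Set (ℝ → ℝ)} {V : Finset Plane} {E : Finset Arc} {e f : Arc}

lemma mono (h : IsDrawing F V E) {V' : Finset Plane} {E' : Finset Arc} (hV : V' ⊆ V) (hE : E' ⊆ E)
    (hends : ∀ e ∈ E', e.ends ⊆ V') : IsDrawing F V' E' where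
  isPseudolineFamily := h.isPseudolineFamily
  curve_mem e he := h.curve_mem e (hE he)
  ends_subset := hends
  notMem_graph e he v hv := h.notMem_graph e (hE he) v (hV hv)

lemma left_mem (h : IsDrawing F V E) (he : e ∈ E) : e.left ∈ V :=
  (Arc.ends_subset_iff.1 (h.ends_subset e he)).1

lemma right_mem (h : IsDrawing F V E) (he : e ∈ E) : e.right ∈ V :=
  (Arc.ends_subset_iff.1 (h.ends_subset e he)).2

lemma continuous_curve (h : IsDrawing F V E) (he : e ∈ E) : Continuous e.curve :=
  h.isPseudolineFamily.continuous _ (h.curve_mem e he)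

lemma curve_eq_of_eq_of_eq (h : IsDrawing F V E) (he : e ∈ E) (hf : f ∈ E) {x y : ℝ} (hxy : x ≠ y)
    (hx : e.curve x = f.curve x) (hy : e.curve y = f.curve y) : e.curve = f.curve :=
  h.isPseudolineFamily.eq_of_eq_of_eq _ (h.curve_mem e he) _ (h.curve_mem f hf) x y hxy hx hy

lemma left_le_left_of_curve_eq (h : IsDrawing F V E) (he : e ∈ E) (hf : f ∈ E)
    (hcurve : e.curve = f.curve) {x : ℝ} (hxe : x ∈ e.span) (hxf : x ∈ f.span) :
    f.left 0 ≤ e.left 0 := by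
  by_contra! hlt
  exact h.notMem_graph e he f.left (h.left_mem hf) ⟨hlt, hxf.1.trans hxe.2⟩ (hcurve ▸ f.left_mem)

lemma right_le_right_of_curve_eq (h : IsDrawing F V E) (he : e ∈ E) (hf : f ∈ E)
    (hcurve : e.curve = f.curve) {x : ℝ} (hxe : x ∈ e.span) (hxf : x ∈ f.span) :
    e.right 0 ≤ f.right 0 := by
  by_contra! hlt
  exact h.notMem_graph e he f.right (h.right_mem hf) ⟨hxe.1.trans hxf.2, hlt⟩
    (hcurve ▸ f.right_mem)

lemma eq_of_curve_eq (h : IsDrawing F V E) (he : e ∈ E) (hf : f ∈ E) (hcurve : e.curve = f.curve)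
    {x : ℝ} (hxe : x ∈ e.span) (hxf : x ∈ f.span) : e = f := by
  refine Arc.ext hcurve (eq_of_mem_graph e.left_mem (hcurve ▸ f.left_mem) ?_)
    (eq_of_mem_graph e.right_mem (hcurve ▸ f.right_mem) ?_)
  · exact (h.left_le_left_of_curve_eq hf he hcurve.symm hxf hxe).antisymm
      (h.left_le_left_of_curve_eq he hf hcurve hxe hxf)
  · exact (h.right_le_right_of_curve_eq he hf hcurve hxe hxf).antisymm
      (h.right_le_right_of_curve_eq hf he hcurve.symm hxf hxe)

lemma eq_of_rank_eq (h : IsDrawing F V E) (he : e ∈ E) (hf : f ∈ E) (hleft : e.left = f.left)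
    (hrank : e.rank = f.rank) : e = f := by
  have hcurve : e.curve = f.curve := by
    refine h.curve_eq_of_eq_of_eq he hf (lt_add_one (e.left 0)).ne (Arc.curve_left_eq hleft) ?_
    simpa only [Arc.rank, hleft] using hrank
  obtain ⟨x, hx, hxr⟩ := exists_between (lt_min e.left_lt_right (hleft ▸ f.left_lt_right))
  exact h.eq_of_curve_eq he hf hcurve ⟨hx, (lt_min_iff.1 hxr).1⟩ ⟨hleft ▸ hx, (lt_min_iff.1 hxr).2⟩

lemma curve_lt_of_rank_lt (h : IsDrawing F V E) (he : e ∈ E) (hf : f ∈ E) (hleft : e.left = f.left)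
    (hrank : e.rank < f.rank) {x : ℝ} (hx : e.left 0 < x) : e.curve x < f.curve x := by
  refine h.isPseudolineFamily.lt_of_lt_of_eq (h.curve_mem e he) (h.curve_mem f hf)
    (lt_add_one (e.left 0)) hx (Arc.curve_left_eq hleft) ?_
  simpa only [Arc.rank, hleft] using hrank

lemma curve_le_of_rank_le (h : IsDrawing F V E) (he : e ∈ E) (hf : f ∈ E) (hleft : e.left = f.left)
    (hrank : e.rank ≤ f.rank) {x : ℝ} (hx : e.left 0 < x) : e.curve x ≤ f.curve x := by
  obtain hlt | heq := hrank.lt_or_eq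
  · exact (h.curve_lt_of_rank_lt he hf hleft hlt hx).le
  · rw [h.eq_of_rank_eq he hf hleft heq]

end IsDrawing

end Arcs

section PlaneDrawings

variable {F : Set (ℝ → ℝ)} {V : Finset Plane} {E : Finset Arc} {e e' f f' : Arc} {w : Plane}

/-- `e'` is the next arc of `E` above `e` among those with the same left end. -/
structure IsNext (E : Finset Arc) (e e' : Arc) : Prop where
  mem : e' ∈ E
  left_eq : e'.left = e.left
  rank_lt : e.rank < e'.rank
  rank_le : ∀ g ∈ E, g.left = e.left → e.rank < g.rank → e'.rank ≤ g.rank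

/-- `e` is the highest arc of `E` among those with the same left end. -/
def IsTop (E : Finset Arc) (e : Arc) : Prop := ∀ g ∈ E, g.left = e.left → g.rank ≤ e.rank

/-- The vertices, other than the common left end, in the part of the plane between the arcs `e`
(below) and `e'` (above). -/
def wedge (V : Finset Plane) (e e' : Arc) : Finset Plane :=
  {w ∈ V | e.left 0 < w 0 ∧ w 0 ≤ e.right 0 ∧ w 0 ≤ e'.right 0 ∧
    e.curve (w 0) ≤ w 1 ∧ w 1 ≤ e'.curve (w 0)}

/-- `w` is a leftmost vertex of the wedge between two consecutive arcs `e` and `e'`. -/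
structure IsWedgeTip (V : Finset Plane) (E : Finset Arc) (e e' : Arc) (w : Plane) : Prop where
  isNext : IsNext E e e'
  mem : w ∈ wedge V e e'
  le_of_mem : ∀ u ∈ wedge V e e', w 0 ≤ u 0

lemma mem_wedge : w ∈ wedge V e e' ↔ w ∈ V ∧ e.left 0 < w 0 ∧ w 0 ≤ e.right 0 ∧
    w 0 ≤ e'.right 0 ∧ e.curve (w 0) ≤ w 1 ∧ w 1 ≤ e'.curve (w 0) :=
  mem_filter

lemma exists_isNext_of_not_isTop (he : ¬ IsTop E e) : ∃ e', IsNext E e e' := by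
  simp only [IsTop, not_forall, not_le] at he
  obtain ⟨g, hg, hleft, hrank⟩ := he
  obtain ⟨e', he', hmin⟩ := exists_min_image {g ∈ E | g.left = e.left ∧ e.rank < g.rank} Arc.rank
    ⟨g, mem_filter.2 ⟨hg, hleft, hrank⟩⟩
  obtain ⟨hmem, hleft', hrank'⟩ := mem_filter.1 he'
  exact ⟨e', hmem, hleft', hrank', fun g hg hgl hgr => hmin g (mem_filter.2 ⟨hg, hgl, hgr⟩)⟩

lemma IsNext.curve_lt (hnext : IsNext E e e') (h : IsDrawing F V E) (he : e ∈ E) {x : ℝ}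
    (hx : e.left 0 < x) : e.curve x < e'.curve x :=
  h.curve_lt_of_rank_lt he hnext.mem hnext.left_eq.symm hnext.rank_lt hx

lemma IsNext.wedge_nonempty (hnext : IsNext E e e') (h : IsDrawing F V E) (he : e ∈ E) :
    (wedge V e e').Nonempty := by
  have he'lt : e.left 0 < e'.right 0 := hnext.left_eq ▸ e'.left_lt_right
  obtain hle | hle := le_total (e.right 0) (e'.right 0)
  · exact ⟨e.right, mem_wedge.2 ⟨h.right_mem he, e.left_lt_right, le_rfl, hle, e.right_mem.ge,
      e.right_mem.trans_le (hnext.curve_lt h he e.left_lt_right).le⟩⟩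
  · exact ⟨e'.right, mem_wedge.2 ⟨h.right_mem hnext.mem, he'lt, hle, le_rfl,
      (hnext.curve_lt h he he'lt).le.trans e'.right_mem.ge, e'.right_mem.le⟩⟩

lemma exists_isWedgeTip_of_not_isTop (h : IsDrawing F V E) (he : e ∈ E) (htop : ¬ IsTop E e) :
    ∃ e' w, IsWedgeTip V E e e' w := by
  obtain ⟨e', hnext⟩ := exists_isNext_of_not_isTop htop
  obtain ⟨w, hw, hmin⟩ := exists_min_image _ (fun w : Plane => w 0) (hnext.wedge_nonempty h he)
  exact ⟨e', w, hnext, hw, hmin⟩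

namespace IsWedgeTip

/-- If the left end of `f` lay strictly to the right of that of `e`, then, as arcs do not cross, it
would be a vertex of the wedge of `e` further left than `w`. -/
lemma left_eq_of_left_le (h : IsDrawing F V E)
    (hplane : (E : Set Arc).Pairwise fun e f => ¬ e.Crosses f) (he : e ∈ E) (hf : f ∈ E)
    (hew : IsWedgeTip V E e e' w) (hfw : IsWedgeTip V E f f' w)
    (hef' : e.curve (w 0) < f'.curve (w 0)) (hfe' : f.curve (w 0) < e'.curve (w 0))
    (hle : e.left 0 ≤ f.left 0) : e.left = f.left := by
  obtain ⟨he', hle', -⟩ := hew.isNext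
  obtain ⟨hf', hlf', -⟩ := hfw.isNext
  obtain ⟨-, -, hwe, hwe', -⟩ := mem_wedge.1 hew.mem
  obtain ⟨-, hfw₀, hwf, hwf', -⟩ := mem_wedge.1 hfw.mem
  have hbelow : e.curve (f.left 0) ≤ f.left 1 := by
    have hcross := hplane he hf' (by rintro rfl; exact lt_irrefl _ hef')
    rw [f.left_mem, Arc.curve_left_eq hlf'.symm]
    exact Arc.curve_le_of_not_crosses (h.continuous_curve he) (h.continuous_curve hf') hcross
      hfw₀.le hle (congrFun hlf' 0).le hwe hwf' hef'
  have habove : f.left 1 ≤ e'.curve (f.left 0) := by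
    have hcross := hplane hf he' (by rintro rfl; exact lt_irrefl _ hfe')
    rw [f.left_mem]
    exact Arc.curve_le_of_not_crosses (h.continuous_curve hf) (h.continuous_curve he') hcross
      hfw₀.le le_rfl (hle' ▸ hle) hwf hwe' hfe'
  obtain hlt | heq := hle.lt_or_eq
  · have hmem : f.left ∈ wedge V e e' := mem_wedge.2
      ⟨h.left_mem hf, hlt, hfw₀.le.trans hwe, hfw₀.le.trans hwe', hbelow, habove⟩
    exact absurd (hew.le_of_mem _ hmem) hfw₀.not_ge
  · rw [← heq] at hbelow habove
    rw [← Arc.curve_left_eq hle'.symm] at habove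
    exact plane_ext heq (e.left_mem.trans (hbelow.antisymm habove))

lemma rank_le (h : IsDrawing F V E) (hf : f ∈ E) (hew : IsWedgeTip V E e e' w)
    (hfe' : f.curve (w 0) < e'.curve (w 0)) (hleft : e.left = f.left) : f.rank ≤ e.rank := by
  by_contra! hlt
  have hw : e'.left 0 < w 0 := hew.isNext.left_eq ▸ (mem_wedge.1 hew.mem).2.1
  exact hfe'.not_ge (h.curve_le_of_rank_le hew.isNext.mem hf (hew.isNext.left_eq.trans hleft)
    (hew.isNext.rank_le f hf hleft.symm hlt) hw)

lemma eq_of_lt_of_lt (h : IsDrawing F V E)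
    (hplane : (E : Set Arc).Pairwise fun e f => ¬ e.Crosses f) (he : e ∈ E) (hf : f ∈ E)
    (hew : IsWedgeTip V E e e' w) (hfw : IsWedgeTip V E f f' w)
    (hef' : e.curve (w 0) < f'.curve (w 0)) (hfe' : f.curve (w 0) < e'.curve (w 0)) : e = f := by
  have hleft : e.left = f.left := by
    obtain hle | hle := le_total (e.left 0) (f.left 0)
    · exact left_eq_of_left_le h hplane he hf hew hfw hef' hfe' hle
    · exact (left_eq_of_left_le h hplane hf he hfw hew hfe' hef' hle).symm
  exact h.eq_of_rank_eq he hf hleft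
    ((hfw.rank_le h he hef' hleft.symm).antisymm (hew.rank_le h hf hfe' hleft))

end IsWedgeTip

lemma card_filter_isTop_le (h : IsDrawing F V E) : #{e ∈ E | IsTop E e} ≤ #V := by
  refine card_le_card_of_forall_subsingleton (fun e v => e.left = v)
    (fun e he => ⟨e.left, h.left_mem (mem_filter.1 he).1, rfl⟩) ?_
  rintro _ - e ⟨he, rfl⟩ f ⟨hf, hleft⟩
  obtain ⟨heE, hetop⟩ := mem_filter.1 he
  obtain ⟨hfE, hftop⟩ := mem_filter.1 hf
  exact h.eq_of_rank_eq heE hfE hleft.symm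
    ((hftop e heE hleft.symm).antisymm (hetop f hfE hleft))

lemma card_filter_wedgeTip_above_le (h : IsDrawing F V E)
    (hplane : (E : Set Arc).Pairwise fun e f => ¬ e.Crosses f) :
    #{e ∈ E | ∃ e' w, IsWedgeTip V E e e' w ∧ e.curve (w 0) < w 1} ≤ #V := by
  refine card_le_card_of_forall_subsingleton
    (fun e w => ∃ e', IsWedgeTip V E e e' w ∧ e.curve (w 0) < w 1) ?_ ?_
  · intro e he
    obtain ⟨-, e', w, hw, hlt⟩ := mem_filter.1 he
    exact ⟨w, (mem_wedge.1 hw.mem).1, e', hw, hlt⟩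
  · rintro w - e ⟨he, e', hew, helt⟩ f ⟨hf, f', hfw, hflt⟩
    obtain ⟨-, -, -, -, -, hwe'⟩ := mem_wedge.1 hew.mem
    obtain ⟨-, -, -, -, -, hwf'⟩ := mem_wedge.1 hfw.mem
    exact hew.eq_of_lt_of_lt h hplane (mem_filter.1 he).1 (mem_filter.1 hf).1 hfw
      (helt.trans_le hwf') (hflt.trans_le hwe')

lemma card_filter_wedgeTip_below_le (h : IsDrawing F V E)
    (hplane : (E : Set Arc).Pairwise fun e f => ¬ e.Crosses f) :
    #{e ∈ E | ∃ e' w, IsWedgeTip V E e e' w ∧ w 1 < e'.curve (w 0)} ≤ #V := by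
  refine card_le_card_of_forall_subsingleton
    (fun e w => ∃ e', IsWedgeTip V E e e' w ∧ w 1 < e'.curve (w 0)) ?_ ?_
  · intro e he
    obtain ⟨-, e', w, hw, hlt⟩ := mem_filter.1 he
    exact ⟨w, (mem_wedge.1 hw.mem).1, e', hw, hlt⟩
  · rintro w - e ⟨he, e', hew, helt⟩ f ⟨hf, f', hfw, hflt⟩
    obtain ⟨-, -, -, -, hwe, -⟩ := mem_wedge.1 hew.mem
    obtain ⟨-, -, -, -, hwf, -⟩ := mem_wedge.1 hfw.mem
    exact hew.eq_of_lt_of_lt h hplane (mem_filter.1 he).1 (mem_filter.1 hf).1 hfw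
      (hwe.trans_lt hflt) (hwf.trans_lt helt)

/-- A plane drawing has linearly many arcs. Euler's formula is replaced by charging each arc which
is not the highest one at its left end to the tip of the wedge above it. -/
lemma IsDrawing.card_le_of_pairwise_not_crosses (h : IsDrawing F V E)
    (hplane : (E : Set Arc).Pairwise fun e f => ¬ e.Crosses f) : #E ≤ 3 * #V := by
  let top : Finset Arc := {e ∈ E | IsTop E e}
  let above : Finset Arc := {e ∈ E | ∃ e' w, IsWedgeTip V E e e' w ∧ e.curve (w 0) < w 1}
  let below : Finset Arc := {e ∈ E | ∃ e' w, IsWedgeTip V E e e' w ∧ w 1 < e'.curve (w 0)}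
  have hcover : E ⊆ top ∪ above ∪ below := by
    intro e he
    by_cases htop : IsTop E e
    · exact mem_union_left _ (mem_union_left _ (mem_filter.2 ⟨he, htop⟩))
    obtain ⟨e', w, hw⟩ := exists_isWedgeTip_of_not_isTop h he htop
    have hlt := hw.isNext.curve_lt h he (mem_wedge.1 hw.mem).2.1
    obtain habove | hbelow := lt_or_ge (e.curve (w 0)) (w 1)
    · exact mem_union_left _ (mem_union_right _ (mem_filter.2 ⟨he, e', w, hw, habove⟩))
    · exact mem_union_right _ (mem_filter.2 ⟨he, e', w, hw, hbelow.trans_lt hlt⟩)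
  calc #E ≤ #(top ∪ above ∪ below) := card_le_card hcover
    _ ≤ #top + #above + #below :=
        (card_union_le _ _).trans (add_le_add_left (card_union_le _ _) _)
    _ ≤ #V + #V + #V := by
        gcongr
        exacts [card_filter_isTop_le h, card_filter_wedgeTip_above_le h hplane,
          card_filter_wedgeTip_below_le h hplane]
    _ = 3 * #V := by ring

end PlaneDrawings

section CrossingLemma

variable {F : Set (ℝ → ℝ)} {V : Finset Plane} {E : Finset Arc} {e f : Arc}

/-- The ordered pairs of crossing arcs of `E`. -/
def crossings (E : Finset Arc) : Finset (Arc × Arc) := {q ∈ E.offDiag | q.1.Crosses q.2}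

lemma mem_crossings : (e, f) ∈ crossings E ↔ (e ∈ E ∧ f ∈ E ∧ e ≠ f) ∧ e.Crosses f := by
  simp [crossings]

lemma crossings_filter_ends_subset (E : Finset Arc) (S : Finset Plane) :
    crossings {e ∈ E | e.ends ⊆ S} = {q ∈ crossings E | q.1.ends ∪ q.2.ends ⊆ S} := by
  ext ⟨e, f⟩
  simp only [mem_crossings, mem_filter, union_subset_iff]
  tauto

namespace IsDrawing

lemma card_le_add_card_crossings (h : IsDrawing F V E) : #E ≤ 3 * #V + #(crossings E) := by
  set crossing := (crossings E).image Prod.fst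
  have hsub : E \ crossing ⊆ E := sdiff_subset
  have hplane : ((E \ crossing : Finset Arc) : Set Arc).Pairwise fun e f => ¬ e.Crosses f :=
    fun e he f hf hne hcross => (mem_sdiff.1 he).2 <|
      mem_image_of_mem Prod.fst (mem_crossings.2 ⟨⟨hsub he, hsub hf, hne⟩, hcross⟩)
  have hdrawing : IsDrawing F V (E \ crossing) :=
    h.mono Subset.rfl hsub fun e he => h.ends_subset e (hsub he)
  calc #E ≤ #(E \ crossing) + #crossing := card_le_card_sdiff_add_card
    _ ≤ 3 * #V + #(crossings E) :=
        add_le_add (hdrawing.card_le_of_pairwise_not_crosses hplane) card_image_le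

lemma curve_ne_of_mem_crossings (h : IsDrawing F V E) (hef : (e, f) ∈ crossings E) :
    e.curve ≠ f.curve := by
  obtain ⟨⟨he, hf, hne⟩, x, ⟨hxe, hxf⟩, -⟩ := mem_crossings.1 hef
  exact fun hcurve => hne (h.eq_of_curve_eq he hf hcurve hxe hxf)

lemma card_ends_union_ends (h : IsDrawing F V E) (hef : (e, f) ∈ crossings E) :
    #(e.ends ∪ f.ends) = 4 := by
  obtain ⟨⟨he, hf, -⟩, x, ⟨hxe, -⟩, hx⟩ := mem_crossings.1 hef
  have hdisj : Disjoint e.ends f.ends := by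
    refine disjoint_left.2 fun v hve hvf => h.curve_ne_of_mem_crossings hef ?_
    have hvx : v 0 ≠ x := fun hv => e.notMem_span_of_mem_ends hve (hv ▸ hxe)
    exact h.curve_eq_of_eq_of_eq he hf hvx
      ((Arc.mem_graph_of_mem_ends hve).symm.trans (Arc.mem_graph_of_mem_ends hvf)) hx
  rw [card_union_of_disjoint hdisj, Arc.card_ends, Arc.card_ends]

/-- Two curves meet at most once, so a crossing is determined by its two curves. -/
lemma card_crossings_le {F : Finset (ℝ → ℝ)} (h : IsDrawing F V E) : #(crossings E) ≤ #F ^ 2 := by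
  rw [sq, ← card_product]
  refine card_le_card_of_injOn (fun q => (q.1.curve, q.2.curve)) ?_ ?_
  · rintro ⟨e, f⟩ hef
    obtain ⟨⟨he, hf, -⟩, -⟩ := mem_crossings.1 hef
    exact mem_product.2 ⟨h.curve_mem e he, h.curve_mem f hf⟩
  · rintro ⟨e, f⟩ hef ⟨e', f'⟩ hef' heq
    obtain ⟨hee', hff'⟩ : e.curve = e'.curve ∧ f.curve = f'.curve := Prod.mk.inj heq
    obtain ⟨⟨he, hf, -⟩, x, ⟨hxe, hxf⟩, hx⟩ := mem_crossings.1 hef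
    obtain ⟨⟨he', hf', -⟩, y, ⟨hye', hyf'⟩, hy⟩ := mem_crossings.1 hef'
    obtain rfl : x = y := by
      by_contra hxy
      rw [← hee', ← hff'] at hy
      exact h.curve_ne_of_mem_crossings hef (h.curve_eq_of_eq_of_eq he hf hxy hx hy)
    rw [h.eq_of_curve_eq he he' hee' hxe hye', h.eq_of_curve_eq hf hf' hff' hxf hyf']

lemma sampled_card_le (h : IsDrawing F V E) {p : ℝ} (hp₀ : 0 ≤ p) (hp₁ : p ≤ 1) :
    p ^ 2 * #E ≤ 3 * (p * #V) + p ^ 4 * #(crossings E) := by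
  refine pow_mul_card_le_of_forall_subset (g := Arc.ends) (c := 3)
    (h := fun q : Arc × Arc => q.1.ends ∪ q.2.ends)
    h.ends_subset (fun e _ => e.card_ends) ?_ (fun q hq => h.card_ends_union_ends hq) hp₀ hp₁ ?_
  · rintro ⟨e, f⟩ hef
    obtain ⟨⟨he, hf, -⟩, -⟩ := mem_crossings.1 hef
    exact union_subset (h.ends_subset e he) (h.ends_subset f hf)
  · intro S hS
    have hS' := (h.mono hS (filter_subset (fun e => e.ends ⊆ S) E)
      fun e he => (mem_filter.1 he).2).card_le_add_card_crossings
    rw [crossings_filter_ends_subset] at hS'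
    exact_mod_cast hS'

/-- The crossing lemma of Ajtai, Chvátal, Newborn and Szemerédi, and of Leighton. -/
lemma card_pow_three_le (h : IsDrawing F V E) (hE : 6 * #V ≤ #E) :
    (#E : ℝ) ^ 3 ≤ 72 * #V ^ 2 * #(crossings E) := by
  obtain hV | hV := V.eq_empty_or_nonempty
  · have hE₀ : E = ∅ := eq_empty_of_forall_notMem fun e he => by simpa [hV] using h.left_mem he
    simp [hE₀, hV]
  · have hcube := pow_three_le_of_forall_prob three_pos (Nat.cast_pos.2 hV.card_pos)
      (by norm_num; exact_mod_cast hE) fun p hp₀ hp₁ => h.sampled_card_le hp₀ hp₁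
    linarith

end IsDrawing

lemma rpow_two_div_three_pow_three {x : ℝ} (hx : 0 ≤ x) : (x ^ ((2 : ℝ) / 3)) ^ 3 = x ^ 2 := by
  rw [← Real.rpow_mul_natCast hx]
  norm_num

lemma IsDrawing.card_le {F : Finset (ℝ → ℝ)} (h : IsDrawing F V E) :
    (#E : ℝ) ≤ 6 * ((#V : ℝ) ^ ((2 : ℝ) / 3) * (#F : ℝ) ^ ((2 : ℝ) / 3)) + 6 * #V := by
  have hK : 0 ≤ (#V : ℝ) ^ ((2 : ℝ) / 3) * (#F : ℝ) ^ ((2 : ℝ) / 3) := by positivity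
  obtain hE | hE := le_total #E (6 * #V)
  · have hE' : (#E : ℝ) ≤ 6 * #V := mod_cast hE
    linarith
  have hcube : (#E : ℝ) ^ 3 ≤
      (6 * ((#V : ℝ) ^ ((2 : ℝ) / 3) * (#F : ℝ) ^ ((2 : ℝ) / 3))) ^ 3 := by
    calc (#E : ℝ) ^ 3 ≤ 72 * #V ^ 2 * #(crossings E) := h.card_pow_three_le hE
      _ ≤ 6 ^ 3 * (#V ^ 2 * #F ^ 2) := by
        have hX : (#(crossings E) : ℝ) ≤ #F ^ 2 := mod_cast h.card_crossings_le
        rw [← mul_assoc]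
        gcongr
        norm_num
      _ = _ := by
        rw [mul_pow, mul_pow, rpow_two_div_three_pow_three (Nat.cast_nonneg _),
          rpow_two_div_three_pow_three (Nat.cast_nonneg _)]
  have hle := le_of_pow_le_pow_left₀ three_ne_zero (by positivity) hcube
  exact hle.trans (le_add_of_nonneg_right (by positivity))

end CrossingLemma

section Incidences

/-- The incidences of points of `P` with the graphs of the functions in `F`. -/
def graphIncidences (P : Finset Plane) (F : Finset (ℝ → ℝ)) : Finset (Plane × (ℝ → ℝ)) :=
  {q ∈ P ×ˢ F | q.1 ∈ graph q.2}

/-- `p` is not the rightmost point of `P` on the graph of `f`. -/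
def HasSuccessor (P : Finset Plane) (f : ℝ → ℝ) (p : Plane) : Prop :=
  ∃ r ∈ P, r ∈ graph f ∧ p 0 < r 0

variable {P : Finset Plane} {F : Finset (ℝ → ℝ)} {f : ℝ → ℝ} {p : Plane}

lemma mem_graphIncidences : (p, f) ∈ graphIncidences P F ↔ (p ∈ P ∧ f ∈ F) ∧ p ∈ graph f := by
  simp [graphIncidences]

lemma card_filter_not_hasSuccessor_le (P : Finset Plane) (F : Finset (ℝ → ℝ)) :
    #{q ∈ graphIncidences P F | ¬ HasSuccessor P q.2 q.1} ≤ #F := by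
  refine card_le_card_of_injOn Prod.snd ?_ ?_
  · rintro ⟨p, f⟩ hq
    exact (mem_graphIncidences.1 (mem_filter.1 hq).1).1.2
  · rintro ⟨p, f⟩ hpf ⟨r, g⟩ hrg (rfl : f = g)
    obtain ⟨hp, hpmax⟩ := mem_filter.1 hpf
    obtain ⟨hr, hrmax⟩ := mem_filter.1 hrg
    obtain ⟨⟨hpP, -⟩, hpf⟩ := mem_graphIncidences.1 hp
    obtain ⟨⟨hrP, -⟩, hrf⟩ := mem_graphIncidences.1 hr
    have hpr : p 0 = r 0 := le_antisymm (not_lt.1 fun hlt => hrmax ⟨p, hpP, hpf, hlt⟩)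
      (not_lt.1 fun hlt => hpmax ⟨r, hrP, hrf, hlt⟩)
    rw [eq_of_mem_graph hpf hrf hpr]

lemma HasSuccessor.exists_arc (h : HasSuccessor P f p) (hp : p ∈ P) (hpf : p ∈ graph f) :
    ∃ e : Arc, e.left = p ∧ e.curve = f ∧ e.ends ⊆ P ∧
      ∀ v ∈ P, v 0 ∈ e.span → v ∉ graph e.curve := by
  obtain ⟨s, hsP, hsf, hps⟩ := h
  obtain ⟨r, hr, hmin⟩ := exists_min_image {r ∈ P | r ∈ graph f ∧ p 0 < r 0} (fun r => r 0)
    ⟨s, mem_filter.2 ⟨hsP, hsf, hps⟩⟩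
  obtain ⟨hrP, hrf, hpr⟩ := mem_filter.1 hr
  exact ⟨⟨f, p, r, hpf, hrf, hpr⟩, rfl, rfl, Arc.ends_subset_iff.2 ⟨hp, hrP⟩,
    fun v hv hspan hvf => (hmin v (mem_filter.2 ⟨hv, hvf, hspan.1⟩)).not_gt hspan.2⟩

/-- The drawing joins consecutive points of `P` along each curve. -/
lemma exists_isDrawing_card_graphIncidences_le (hF : IsPseudolineFamily F) (P : Finset Plane) :
    ∃ E, IsDrawing F P E ∧ #(graphIncidences P F) ≤ #F + #E := by
  set A := {q ∈ graphIncidences P F | HasSuccessor P q.2 q.1}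
  have hA : (A : Set (Plane × (ℝ → ℝ))) ⊆ (fun e : Arc => (e.left, e.curve)) ''
      {e | e.curve ∈ F ∧ e.ends ⊆ P ∧ ∀ v ∈ P, v 0 ∈ e.span → v ∉ graph e.curve} := by
    rintro ⟨p, f⟩ hpf
    obtain ⟨hinc, hsucc⟩ := mem_filter.1 hpf
    obtain ⟨⟨hp, hf⟩, hpf⟩ := mem_graphIncidences.1 hinc
    obtain ⟨e, rfl, rfl, he⟩ := hsucc.exists_arc hp hpf
    exact ⟨e, ⟨hf, he⟩, rfl⟩
  obtain ⟨E, hE, hEA⟩ := subset_set_image_iff.1 hA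
  refine ⟨E, ⟨hF, fun e he => (hE he).1, fun e he => (hE he).2.1, fun e he => (hE he).2.2⟩, ?_⟩
  calc #(graphIncidences P F)
      = #A + #{q ∈ graphIncidences P F | ¬ HasSuccessor P q.2 q.1} :=
        (card_filter_add_card_filter_not _).symm
    _ ≤ #E + #F := add_le_add (hEA ▸ card_image_le) (card_filter_not_hasSuccessor_le P F)
    _ = #F + #E := add_comm _ _

lemma card_graphIncidences_le (hF : IsPseudolineFamily F) (P : Finset Plane) :
    (#(graphIncidences P F) : ℝ) ≤
      6 * ((#P : ℝ) ^ ((2 : ℝ) / 3) * (#F : ℝ) ^ ((2 : ℝ) / 3)) + 6 * #P + #F := by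
  obtain ⟨E, hE, hle⟩ := exists_isDrawing_card_graphIncidences_le hF P
  have hle' : (#(graphIncidences P F) : ℝ) ≤ #F + #E := mod_cast hle
  linarith [hE.card_le]

lemma incidences_image_graph_le (P : Finset Plane) (F : Finset (ℝ → ℝ)) :
    Incidences P (F.image graph) ≤ #(graphIncidences P F) := by
  refine card_le_card_of_surjOn (Prod.map id graph) ?_
  rintro ⟨p, γ⟩ hpγ
  obtain ⟨hmem, hp⟩ := mem_filter.1 hpγ
  obtain ⟨hpP, hγ⟩ := mem_product.1 hmem
  obtain ⟨f, hf, rfl⟩ := mem_image.1 hγ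
  exact ⟨(p, f), mem_graphIncidences.2 ⟨⟨hpP, hf⟩, hp⟩, rfl⟩

lemma incidences_le_of_forall_graph {C : Finset (Set Plane)}
    (hC : ∀ γ ∈ C, ∃ f, Continuous f ∧ γ = graph f)
    (hpair : (C : Set (Set Plane)).Pairwise fun γ δ => (γ ∩ δ).Subsingleton) (P : Finset Plane) :
    (Incidences P C : ℝ) ≤
      6 * ((#P : ℝ) ^ ((2 : ℝ) / 3) * (#C : ℝ) ^ ((2 : ℝ) / 3)) + 6 * #P + #C := by
  have hsub : (C : Set (Set Plane)) ⊆ graph '' {f | Continuous f} := fun γ hγ => by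
    obtain ⟨f, hf, rfl⟩ := hC γ hγ
    exact ⟨f, hf, rfl⟩
  obtain ⟨F, hF, rfl⟩ := subset_set_image_iff.1 hsub
  have hfam : IsPseudolineFamily F := .of_pairwise_subsingleton (fun f hf => hF hf)
    fun f hf g hg hne => hpair (mem_image_of_mem _ hf) (mem_image_of_mem _ hg)
      (graph_injective.ne hne)
  rw [card_image_of_injective _ graph_injective]
  exact (Nat.cast_le.2 (incidences_image_graph_le P F)).trans (card_graphIncidences_le hfam P)

variable {d : ℕ}

lemma incidences_filter_add_incidences_filter_not (P : Finset (Fin d → ℝ))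
    (C : Finset (Set (Fin d → ℝ))) (r : Set (Fin d → ℝ) → Prop) :
    Incidences P {γ ∈ C | r γ} + Incidences P {γ ∈ C | ¬ r γ} = Incidences P C := by
  simp only [Incidences]
  rw [← card_filter_add_card_filter_not (s := {q ∈ P ×ˢ C | q.1 ∈ q.2}) fun q => r q.2]
  congr 2 <;> ext <;> simp only [mem_filter, mem_product] <;> tauto

lemma incidences_le_card_of_pairwiseDisjoint (P : Finset (Fin d → ℝ))
    {C : Finset (Set (Fin d → ℝ))} (hC : (C : Set (Set (Fin d → ℝ))).PairwiseDisjoint id) :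
    Incidences P C ≤ #P := by
  refine card_le_card_of_injOn Prod.fst ?_ ?_
  · rintro q hq
    exact (mem_product.1 (mem_filter.1 hq).1).1
  · rintro ⟨p, γ⟩ hpγ ⟨r, δ⟩ hrδ (rfl : p = r)
    obtain ⟨hγ, hp⟩ := mem_filter.1 hpγ
    obtain ⟨hδ, hp'⟩ := mem_filter.1 hrδ
    obtain rfl : γ = δ :=
      hC.elim (mem_product.1 hγ).2 (mem_product.1 hδ).2 (Set.not_disjoint_iff.2 ⟨p, hp, hp'⟩)
    rfl

end Incidences

section Lines

variable {d : ℕ} {ℓ ℓ' : Set (Fin d → ℝ)}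

lemma isLine_eq_of_mem_of_mem (hℓ : IsLine ℓ) {p q : Fin d → ℝ} (hp : p ∈ ℓ) (hq : q ∈ ℓ)
    (hpq : p ≠ q) : ℓ = {x | ∃ t : ℝ, x = p + t • (q - p)} := by
  obtain ⟨a, b, -, rfl⟩ := hℓ
  obtain ⟨s, rfl⟩ := hp
  obtain ⟨t, rfl⟩ := hq
  have hts : t - s ≠ 0 := sub_ne_zero.2 fun hts => hpq (by rw [hts])
  ext x
  constructor
  · rintro ⟨u, rfl⟩
    refine ⟨(u - s) / (t - s), ?_⟩
    rw [add_sub_add_left_eq_sub, ← sub_smul, smul_smul, div_mul_cancel₀ _ hts]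
    module
  · rintro ⟨u, rfl⟩
    exact ⟨s + u * (t - s), by module⟩

lemma inter_subsingleton_of_isLine (hℓ : IsLine ℓ) (hℓ' : IsLine ℓ') (hne : ℓ ≠ ℓ') :
    (ℓ ∩ ℓ').Subsingleton := by
  intro p hp q hq
  by_contra hpq
  exact hne ((isLine_eq_of_mem_of_mem hℓ hp.1 hq.1 hpq).trans
    (isLine_eq_of_mem_of_mem hℓ' hp.2 hq.2 hpq).symm)

lemma eq_verticalLine_or_graph_of_isLine {ℓ : Set Plane} (hℓ : IsLine ℓ) :
    (∃ c, ℓ = verticalLine c) ∨ ∃ f, Continuous f ∧ ℓ = graph f := by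
  obtain ⟨a, b, hb, rfl⟩ := hℓ
  by_cases hb₀ : b 0 = 0
  · have hb₁ : b 1 ≠ 0 := fun hb₁ => hb (plane_ext hb₀ hb₁)
    refine .inl ⟨a 0, Set.ext fun x => ⟨?_, fun hx => ⟨(x 1 - a 1) / b 1, plane_ext ?_ ?_⟩⟩⟩
    · rintro ⟨t, rfl⟩
      simp [hb₀]
    · simpa [hb₀] using hx
    · simp [hb₁]
  · refine .inr ⟨fun x => a 1 + (x - a 0) / b 0 * b 1, by fun_prop, Set.ext fun x =>
      ⟨?_, fun hx => ⟨(x 0 - a 0) / b 0, plane_ext ?_ ?_⟩⟩⟩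
    · rintro ⟨t, rfl⟩
      simp [hb₀]
    · simp [hb₀]
    · simpa using hx

end Lines

end SzemerediTrotter

open SzemerediTrotter in
/-- The bound holds for `x`-monotone pseudolines in place of lines. -/
theorem szemeredi_trotter_general (P : Finset (Fin 2 → ℝ)) (L : Finset (Set (Fin 2 → ℝ)))
    (hL : ∀ ℓ ∈ L, (∃ c, ℓ = verticalLine c) ∨ ∃ f, Continuous f ∧ ℓ = graph f)
    (hpair : (L : Set (Set (Fin 2 → ℝ))).Pairwise fun ℓ ℓ' => (ℓ ∩ ℓ').Subsingleton) :
    (Incidences P L : ℝ) ≤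
      7 * ((P.card : ℝ) ^ ((2 : ℝ) / 3) * (L.card : ℝ) ^ ((2 : ℝ) / 3)
            + (P.card : ℝ) + (L.card : ℝ)) := by
  set G := L.filter fun ℓ => ℓ ∉ Set.range verticalLine
  have hGL : G ⊆ L := Finset.filter_subset _ L
  have hvert : Incidences P (L.filter (· ∈ Set.range verticalLine)) ≤ P.card :=
    incidences_le_card_of_pairwiseDisjoint P <| pairwiseDisjoint_verticalLine.subset
      fun ℓ hℓ => (Finset.mem_filter.1 hℓ).2
  have hgraph := incidences_le_of_forall_graph (C := G) (fun ℓ hℓ => (hL ℓ (hGL hℓ)).resolve_left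
    fun ⟨c, hc⟩ => (Finset.mem_filter.1 hℓ).2 ⟨c, hc.symm⟩) (hpair.mono hGL) P
  have hsplit := incidences_filter_add_incidences_filter_not P L (· ∈ Set.range verticalLine)
  calc (Incidences P L : ℝ) ≤ P.card + (6 * ((P.card : ℝ) ^ ((2 : ℝ) / 3) *
          (G.card : ℝ) ^ ((2 : ℝ) / 3)) + 6 * P.card + G.card) := by
        rw [← hsplit, Nat.cast_add]
        exact add_le_add (Nat.cast_le.2 hvert) hgraph
    _ ≤ P.card + (6 * ((P.card : ℝ) ^ ((2 : ℝ) / 3) * (L.card : ℝ) ^ ((2 : ℝ) / 3))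
          + 6 * P.card + L.card) := by gcongr
    _ ≤ _ := by
        have hK : 0 ≤ (P.card : ℝ) ^ ((2 : ℝ) / 3) * (L.card : ℝ) ^ ((2 : ℝ) / 3) := by positivity
        linarith [(Nat.cast_nonneg L.card : (0 : ℝ) ≤ L.card)]

/-- **Szemerédi–Trotter theorem.** There is an absolute constant `c` such that for
every set `P` of `m` distinct points and every set `L` of `n` distinct lines in the
plane, the number of incidences satisfies `I(P,L) ≤ c (m^{2/3} n^{2/3} + m + n)`. -/
theorem szemeredi_trotter :
    ∃ c : ℝ, 0 < c ∧
      ∀ (P : Finset (Fin 2 → ℝ)) (L : Finset (Set (Fin 2 → ℝ))),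
        (∀ ℓ ∈ L, IsLine ℓ) →
        (Incidences P L : ℝ) ≤
          c * ((P.card : ℝ) ^ ((2 : ℝ) / 3) * (L.card : ℝ) ^ ((2 : ℝ) / 3)
                + (P.card : ℝ) + (L.card : ℝ)) :=
  ⟨7, by norm_num, fun P L hL => szemeredi_trotter_general P L
    (fun ℓ hℓ => SzemerediTrotter.eq_verticalLine_or_graph_of_isLine (hL ℓ hℓ))
    fun ℓ hℓ ℓ' hℓ' => SzemerediTrotter.inter_subsingleton_of_isLine (hL ℓ hℓ) (hL ℓ' hℓ')⟩
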